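/- arXiv:2004.03746 — 3 statements merged into one kernel-verified Lean document; each statement's English description precedes it below -/
import Mathlib

section
/- The R-linear map ι : A → A ⊗_R A defined by ι(a) = a ⊗ x − (a·x) ⊗ 1 is injective and its image is exactly ker(m); hence ι is an R-module isomorphism from A onto ker(m). (This is the algebraic content of the paper's isomorphism isom₁ between the surviving subcomplex for the left-twisted first Reidemeister move and the complex of the simplified diagram.) -/
open Polynomial TensorProduct

/-- Khovanov's parametrized Frobenius algebra `A = R[X]/(X² − sX − t)`. -/
noncomputable abbrev KhovanovA (R : Type*) [CommRing R] (s t : R) : Type _ :=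
  AdjoinRoot (X ^ 2 - C s * X - C t)

/-- The generator `x` (the image of `X`) of Khovanov's parametrized Frobenius algebra. -/
noncomputable abbrev KhovanovX (R : Type*) [CommRing R] (s t : R) : KhovanovA R s t :=
  AdjoinRoot.root (X ^ 2 - C s * X - C t)

/-!
In an algebra with basis `{1, x}`, a functional `φ` with `φ 1 = 0` and `φ x = 1` gives the left
inverse `id ⊗ φ` of `ι`. Since `a ↦ a ⊗ 1` is a section of `m`, the kernel of `m` consists of the
elements `z - m z ⊗ 1`, and for `z = a ⊗ (c + d x)` this element is `ι (d a)`.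
-/

section Algebra

variable {R A : Type*} [CommRing R] [Ring A] [Algebra R A]

variable (R) in
/-- The map `ι : a ↦ a ⊗ x - a x ⊗ 1`, for an arbitrary element `x` of an `R`-algebra `A`. -/
noncomputable def khovanovIota (x : A) : A →ₗ[R] A ⊗[R] A :=
  (TensorProduct.mk R A A).flip x - (TensorProduct.mk R A A).flip 1 ∘ₗ LinearMap.mulRight R x

@[simp]
theorem khovanovIota_apply (x a : A) :
    khovanovIota R x a = a ⊗ₜ[R] x - (a * x) ⊗ₜ[R] 1 :=
  rfl

theorem khovanovIota_injective {x : A} (φ : A →ₗ[R] R) (h_one : φ 1 = 0) (h_x : φ x = 1) :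
    Function.Injective (khovanovIota R x) := by
  have h_left : Function.LeftInverse (TensorProduct.rid R A ∘ₗ φ.lTensor A) (khovanovIota R x) :=
    fun a ↦ by simp [h_one, h_x]
  exact h_left.injective

theorem range_khovanovIota_le_ker_mul' (x : A) :
    LinearMap.range (khovanovIota R x) ≤ LinearMap.ker (LinearMap.mul' R A) := by
  rintro _ ⟨a, rfl⟩
  simp

theorem sub_mul'_tmul_one_mem_range_khovanovIota {x : A}
    (h_span : Submodule.span R {1, x} = ⊤) (z : A ⊗[R] A) :
    z - LinearMap.mul' R A z ⊗ₜ[R] 1 ∈ LinearMap.range (khovanovIota R x) := by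
  induction z with
  | zero => simp
  | tmul a y =>
    obtain ⟨c, d, rfl⟩ : ∃ c d : R, c • 1 + d • x = y :=
      Submodule.mem_span_pair.1 (h_span ▸ Submodule.mem_top)
    refine ⟨d • a, ?_⟩
    rw [LinearMap.mul'_apply]
    simp only [khovanovIota_apply, mul_add, mul_smul_comm, smul_mul_assoc, mul_one, tmul_add,
      add_tmul, tmul_smul, smul_tmul']
    abel
  | add z w hz hw =>
    rw [map_add, add_tmul, add_sub_add_comm]
    exact add_mem hz hw

theorem range_khovanovIota_eq_ker_mul' {x : A} (h_span : Submodule.span R {1, x} = ⊤) :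
    LinearMap.range (khovanovIota R x) = LinearMap.ker (LinearMap.mul' R A) := by
  refine (range_khovanovIota_le_ker_mul' x).antisymm fun z hz ↦ ?_
  simpa [LinearMap.mem_ker.1 hz] using sub_mul'_tmul_one_mem_range_khovanovIota h_span z

theorem khovanov_iota_iso_ker_general (b : Module.Basis (Fin 2) R A) (hb : b 0 = 1) :
    Function.Injective (khovanovIota R (b 1))
    ∧ LinearMap.range (khovanovIota R (b 1)) = LinearMap.ker (LinearMap.mul' R A) := by
  have h_span : Submodule.span R {1, b 1} = ⊤ := by
    simpa [Fin.range_fin_succ, Set.pair_comm, hb, Fin.tail] using b.span_eq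
  exact ⟨khovanovIota_injective (b.coord 1) (by simp [← hb]) (by simp),
    range_khovanovIota_eq_ker_mul' h_span⟩

end Algebra

section KhovanovA

variable {R : Type*} [CommRing R] (s t : R)

theorem khovanovX_mul_self :
    KhovanovX R s t * KhovanovX R s t = t • 1 + s • KhovanovX R s t := by
  have h : KhovanovX R s t ^ 2 - s • KhovanovX R s t - t • 1 = 0 := by
    have h_mk := AdjoinRoot.mk_self (f := X ^ 2 - C s * X - C t)
    simpa only [map_sub, map_mul, map_pow, AdjoinRoot.mk_X, AdjoinRoot.mk_C, Algebra.smul_def,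
      AdjoinRoot.algebraMap_eq, mul_one] using h_mk
  linear_combination h

theorem eval₂_quadraticAlgebra_omega :
    (X ^ 2 - C s * X - C t).eval₂
      (Algebra.ofId R (QuadraticAlgebra R t s) : R →+* QuadraticAlgebra R t s)
      QuadraticAlgebra.omega = 0 := by
  simp [pow_two, QuadraticAlgebra.omega_mul_omega_eq_algebraMap]

/-- The homomorphism from `A` to Mathlib's model `R ⊕ R ω`, `ω² = t + s ω`, sending `x` to `ω`. -/
noncomputable def khovanovToQuadraticAlgebra : KhovanovA R s t →ₐ[R] QuadraticAlgebra R t s :=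
  AdjoinRoot.liftAlgHom _ (Algebra.ofId R _) QuadraticAlgebra.omega
    (eval₂_quadraticAlgebra_omega s t)

@[simp]
theorem khovanovToQuadraticAlgebra_khovanovX :
    khovanovToQuadraticAlgebra s t (KhovanovX R s t) = QuadraticAlgebra.omega :=
  AdjoinRoot.liftAlgHom_root _ _ _ _

/-- The identification of `A` with `R ⊕ R ω`; it supplies the basis `{1, x}` over every `R`, the
zero ring included. -/
noncomputable def khovanovEquiv : KhovanovA R s t ≃ₐ[R] QuadraticAlgebra R t s :=
  AlgEquiv.ofAlgHom (khovanovToQuadraticAlgebra s t)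
    (QuadraticAlgebra.lift ⟨KhovanovX R s t, khovanovX_mul_self s t⟩)
    (by ext <;> simp) (by ext; simp)

/-- The basis `{1, x}` of `A`, indexed so that `1` comes first. -/
noncomputable def khovanovBasis : Module.Basis (Fin 2) R (KhovanovA R s t) :=
  (QuadraticAlgebra.basis t s).map (khovanovEquiv s t).symm.toLinearEquiv

theorem khovanovBasis_zero : khovanovBasis s t 0 = 1 := by
  rw [Module.Basis.apply_eq_iff]
  ext i
  fin_cases i <;> simp [khovanovBasis, QuadraticAlgebra.re_one, QuadraticAlgebra.im_one]

theorem khovanovBasis_one : khovanovBasis s t 1 = KhovanovX R s t := by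
  rw [Module.Basis.apply_eq_iff]
  ext i
  fin_cases i <;> simp [khovanovBasis, khovanovEquiv]

end KhovanovA

/-- The map `ι(a) = a ⊗ x − (a·x) ⊗ 1` is injective with image exactly `ker m`;
hence it is an isomorphism from `A` onto `ker m`. -/
theorem khovanov_iota_iso_ker (R : Type*) [CommRing R] (s t : R)
    (ι : KhovanovA R s t →ₗ[R] KhovanovA R s t ⊗[R] KhovanovA R s t)
    (hι : ∀ a : KhovanovA R s t,
      ι a = a ⊗ₜ[R] KhovanovX R s t - (a * KhovanovX R s t) ⊗ₜ[R] (1 : KhovanovA R s t)) :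
    Function.Injective ι
    ∧ LinearMap.range ι = LinearMap.ker (LinearMap.mul' R (KhovanovA R s t)) := by
  obtain rfl : ι = khovanovIota R (khovanovBasis s t 1) :=
    LinearMap.ext fun a ↦ by rw [hι, khovanovIota_apply, khovanovBasis_one]
  exact khovanov_iota_iso_ker_general (khovanovBasis s t) (khovanovBasis_zero s t)
end

section
/- Define R-linear maps h : A → A ⊗_R A by h(a) = a ⊗ 1, r : A ⊗_R A → A by r = id_A ⊗ ε (so r(a ⊗ 1) = 0 and r(a ⊗ x) = a), ι : A → A ⊗_R A by ι(a) = a ⊗ x − (a·x) ⊗ 1, and ρ = ι ∘ r : A ⊗_R A → A ⊗_R A. Then h ∘ m = id_{A⊗A} − ρ and m ∘ h = id_A. (This is the algebraic content of the paper's Proposition for the left-twisted first Reidemeister move: h is the explicit chain homotopy h₁ satisfying δ∘h₁ + h₁∘δ = id − in∘ρ₁ for the local two-term Khovanov complex.) -/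
open Polynomial TensorProduct

/-!
Any `b : A` is `c • 1 + ε b • x` for some scalar `c`, because `ε` reads off the coefficient of `x`.
Scalars move across the tensor sign, so `a ⊗ b = c • (a ⊗ 1) + ε b • (a ⊗ x)`, while
`(a * b) ⊗ 1 = c • (a ⊗ 1) + ε b • ((a * x) ⊗ 1)`. The difference of the two is `ι (r (a ⊗ b))`.
-/

theorem exists_eq_smul_add_smul_of_span_pair_eq_top {R M : Type*} [Semiring R] [AddCommMonoid M]
    [Module R M] {u x : M} (hspan : Submodule.span R {u, x} = ⊤) {ε : M →ₗ[R] R}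
    (hεu : ε u = 0) (hεx : ε x = 1) (b : M) : ∃ c : R, b = c • u + ε b • x := by
  obtain ⟨c, d, rfl⟩ :=
    Submodule.mem_span_pair.mp (hspan ▸ Submodule.mem_top : b ∈ Submodule.span R {u, x})
  have hε : ε (c • u + d • x) = d := by simp [hεu, hεx]
  exact ⟨c, by rw [hε]⟩

section SpannedByOneAndX

variable {R A : Type*} [CommRing R] [Ring A] [Algebra R A] {x : A} {ε : A →ₗ[R] R}

theorem mul_tmul_one_eq_tmul_sub
    (hspan : Submodule.span R {1, x} = ⊤) (hε1 : ε 1 = 0) (hεx : ε x = 1) (a b : A) :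
    (a * b) ⊗ₜ[R] (1 : A) = a ⊗ₜ[R] b - ε b • (a ⊗ₜ[R] x - (a * x) ⊗ₜ[R] (1 : A)) := by
  obtain ⟨c, hb⟩ := exists_eq_smul_add_smul_of_span_pair_eq_top hspan hε1 hεx b
  have hmul : (a * b) ⊗ₜ[R] (1 : A) = c • a ⊗ₜ[R] (1 : A) + ε b • (a * x) ⊗ₜ[R] (1 : A) := by
    conv_lhs => rw [hb]
    simp only [mul_add, mul_smul_comm, mul_one, add_tmul, smul_tmul']
  have htmul : a ⊗ₜ[R] b = c • a ⊗ₜ[R] (1 : A) + ε b • a ⊗ₜ[R] x := by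
    conv_lhs => rw [hb]
    simp only [tmul_add, tmul_smul]
  rw [hmul, htmul]
  module

theorem khovanov_R1_homotopy_general
    (hspan : Submodule.span R {1, x} = ⊤) (hε1 : ε 1 = 0) (hεx : ε x = 1)
    {h : A →ₗ[R] A ⊗[R] A} (hh : ∀ a : A, h a = a ⊗ₜ[R] (1 : A))
    {r : A ⊗[R] A →ₗ[R] A} (hr : ∀ a b : A, r (a ⊗ₜ[R] b) = ε b • a)
    {ι : A →ₗ[R] A ⊗[R] A} (hι : ∀ a : A, ι a = a ⊗ₜ[R] x - (a * x) ⊗ₜ[R] (1 : A)) :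
    h ∘ₗ LinearMap.mul' R A = LinearMap.id - ι ∘ₗ r ∧ LinearMap.mul' R A ∘ₗ h = LinearMap.id := by
  refine ⟨TensorProduct.ext' fun a b => ?_, LinearMap.ext fun a => by simp [hh]⟩
  calc h (LinearMap.mul' R A (a ⊗ₜ b))
      = (a * b) ⊗ₜ 1 := by rw [LinearMap.mul'_apply, hh]
    _ = a ⊗ₜ b - ε b • (a ⊗ₜ x - (a * x) ⊗ₜ 1) := mul_tmul_one_eq_tmul_sub hspan hε1 hεx a b
    _ = a ⊗ₜ b - ι (r (a ⊗ₜ b)) := by rw [hr, map_smul, hι]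

end SpannedByOneAndX

theorem span_one_gen_eq_top_of_dim_le_two {R A : Type*} [CommRing R] [Ring A] [Algebra R A]
    (pb : PowerBasis R A) (hdim : pb.dim ≤ 2) : Submodule.span R {1, pb.gen} = ⊤ := by
  rw [eq_top_iff, ← pb.basis.span_eq]
  refine Submodule.span_mono ?_
  rintro _ ⟨⟨i, hi⟩, rfl⟩
  have hi2 : i < 2 := hi.trans_le hdim
  rw [pb.basis_eq_pow]
  interval_cases i <;> simp

theorem KhovanovA.span_one_X_eq_top (R : Type*) [CommRing R] (s t : R) :
    Submodule.span R {1, KhovanovX R s t} = ⊤ := by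
  have hmonic : (X ^ 2 - C s * X - C t).Monic := by monicity!
  have hdeg : (X ^ 2 - C s * X - C t).natDegree ≤ 2 := by compute_degree
  exact span_one_gen_eq_top_of_dim_le_two (AdjoinRoot.powerBasis' hmonic) hdeg

/-- The explicit chain homotopy for the left-twisted first Reidemeister move: with
`h(a) = a ⊗ 1`, `r = id ⊗ ε`, `ι(a) = a ⊗ x − (a·x) ⊗ 1`, and `ρ = ι ∘ r`, one has
`h ∘ m = id − ρ` and `m ∘ h = id`. -/
theorem khovanov_R1_homotopy (R : Type*) [CommRing R] (s t : R)
    (ε : KhovanovA R s t →ₗ[R] R)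
    (hε1 : ε 1 = 0) (hεx : ε (KhovanovX R s t) = 1)
    (h : KhovanovA R s t →ₗ[R] KhovanovA R s t ⊗[R] KhovanovA R s t)
    (hh : ∀ a : KhovanovA R s t, h a = a ⊗ₜ[R] (1 : KhovanovA R s t))
    (r : KhovanovA R s t ⊗[R] KhovanovA R s t →ₗ[R] KhovanovA R s t)
    (hr : ∀ a b : KhovanovA R s t, r (a ⊗ₜ[R] b) = ε b • a)
    (ι : KhovanovA R s t →ₗ[R] KhovanovA R s t ⊗[R] KhovanovA R s t)
    (hι : ∀ a : KhovanovA R s t,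
      ι a = a ⊗ₜ[R] KhovanovX R s t - (a * KhovanovX R s t) ⊗ₜ[R] (1 : KhovanovA R s t))
    (ρ : KhovanovA R s t ⊗[R] KhovanovA R s t →ₗ[R] KhovanovA R s t ⊗[R] KhovanovA R s t)
    (hρ : ρ = ι ∘ₗ r) :
    h ∘ₗ LinearMap.mul' R (KhovanovA R s t) = LinearMap.id - ρ
    ∧ LinearMap.mul' R (KhovanovA R s t) ∘ₗ h = LinearMap.id := by
  subst hρ
  exact khovanov_R1_homotopy_general (KhovanovA.span_one_X_eq_top R s t) hε1 hεx hh hr hι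
end

section
/- The two-term cochain complex 0 → A ⊗_R A →(m)→ A → 0, concentrated in degrees 0 and 1 with differential m, has vanishing cohomology in degree 1, and its degree-0 cohomology (that is, ker(m)) is isomorphic as an R-module to A. (This is the local statement of invariance of the parametrized Khovanov homology under the left-twisted first Reidemeister move.) -/
/-!
Multiplication `A ⊗ A → A` is split by `a ↦ a ⊗ 1`, so it is surjective and its kernel is isomorphic
to `(A ⊗ A) / (A ⊗ 1)`, which by right exactness of the tensor product is `A ⊗ (A / R·1)`. When `A`
has a basis `1, x₁, …, xₙ`, the quotient `A / R·1` is free on the `xᵢ`, so the kernel is `Aⁿ`.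
-/

open Polynomial TensorProduct

open LinearMap Module

theorem isCompl_range_ker_of_comp_eq_id {R M N : Type*} [Ring R] [AddCommGroup M] [Module R M]
    [AddCommGroup N] [Module R N] {f : M →ₗ[R] N} {g : N →ₗ[R] M} (h : f ∘ₗ g = LinearMap.id) :
    IsCompl (range g) (ker f) := by
  have hf : range f = ⊤ := range_eq_top.2 (surjective_of_comp_eq_id g f h)
  have hg : ker g = ⊥ := ker_eq_bot.2 (injective_of_comp_eq_id g f h)
  have idem : IsIdempotentElem (g ∘ₗ f) := by
    rw [IsIdempotentElem, End.mul_eq_comp, LinearMap.comp_assoc,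
      ← LinearMap.comp_assoc f g f, h, id_comp]
  rw [← range_comp_of_range_eq_top g hf, ← ker_comp_of_ker_eq_bot f hg]
  exact idem.isCompl

section TailCoord

variable {R M : Type*} [Semiring R] [AddCommMonoid M] [Module R M] {n : ℕ}
  (b : Basis (Fin (n + 1)) R M)

/-- The coordinates of a vector other than its zeroth one. -/
noncomputable def tailCoord : M →ₗ[R] Fin n → R :=
  funLeft R R Fin.succ ∘ₗ b.equivFun

theorem tailCoord_surjective : Function.Surjective (tailCoord b) :=
  (funLeft_surjective_of_injective R R _ (Fin.succ_injective n)).comp b.equivFun.surjective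

end TailCoord

section Algebra

variable {R A : Type*} [CommRing R] [Ring A] [Algebra R A]

theorem mul'_comp_mk_flip_one : mul' R A ∘ₗ (TensorProduct.mk R A A).flip 1 = LinearMap.id := by
  ext a
  simp

theorem range_lTensor_algebraLinearMap :
    range ((Algebra.linearMap R A).lTensor A) = range ((TensorProduct.mk R A A).flip 1) := by
  have h : (TensorProduct.mk R A A).flip 1 =
      (Algebra.linearMap R A).lTensor A ∘ₗ (TensorProduct.rid R A).symm := by
    ext a
    simp
  rw [h, LinearEquiv.range_comp]

theorem isCompl_range_lTensor_ker_mul' :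
    IsCompl (range ((Algebra.linearMap R A).lTensor A)) (ker (mul' R A)) :=
  range_lTensor_algebraLinearMap (R := R) (A := A) ▸
    isCompl_range_ker_of_comp_eq_id mul'_comp_mk_flip_one

/-- The kernel of multiplication as `A ⊗ P`, where `P` is a cokernel of the unit map `R → A`: both
are the quotient of `A ⊗ A` by `A ⊗ 1`. -/
noncomputable def kerMulEquivTensor {P : Type*} [AddCommGroup P] [Module R P] {g : A →ₗ[R] P}
    (hg : Function.Exact (Algebra.linearMap R A) g) (hg_surj : Function.Surjective g) :
    ker (mul' R A) ≃ₗ[R] A ⊗[R] P :=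
  (Submodule.quotientEquivOfIsCompl _ _ isCompl_range_lTensor_ker_mul').symm ≪≫ₗ
    lTensor.equiv A hg hg_surj

variable {n : ℕ} (b : Basis (Fin (n + 1)) R A)

theorem exact_algebraLinearMap_tailCoord (hb : b 0 = 1) :
    Function.Exact (Algebra.linearMap R A) (tailCoord b) := by
  refine exact_of_comp_of_mem_range ?_ fun a ha => ⟨b.repr a 0, ?_⟩
  · ext i
    simp [tailCoord, funLeft, ← hb]
  · have coord_succ (i : Fin n) : b.repr a i.succ = 0 := congrFun ha i
    calc Algebra.linearMap R A (b.repr a 0) = b.repr a 0 • b 0 := by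
          rw [hb, Algebra.linearMap_apply, Algebra.algebraMap_eq_smul_one]
      _ = ∑ i, b.repr a i • b i := by
          rw [Fin.sum_univ_succ]
          simp only [coord_succ, zero_smul, Finset.sum_const_zero, add_zero]
      _ = a := b.sum_repr a

theorem khovanov_R1_local_invariance_general (hb : b 0 = 1) :
    Subsingleton (A ⧸ range (mul' R A)) ∧ Nonempty (ker (mul' R A) ≃ₗ[R] (Fin n → A)) :=
  ⟨Submodule.Quotient.subsingleton_iff.2 <|
      range_eq_top.2 (surjective_of_comp_eq_id _ _ mul'_comp_mk_flip_one),
    ⟨kerMulEquivTensor (exact_algebraLinearMap_tailCoord b hb) (tailCoord_surjective b) ≪≫ₗ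
      TensorProduct.piScalarRight R R A (Fin n)⟩⟩

end Algebra

theorem KhovanovA.exists_basis_eq_pow {R : Type*} [CommRing R] (s t : R) :
    ∃ b : Basis (Fin 2) R (KhovanovA R s t), ∀ i, b i = KhovanovX R s t ^ (i : ℕ) := by
  rcases subsingleton_or_nontrivial R with _ | _
  · have := Module.subsingleton R (KhovanovA R s t)
    exact ⟨.ofRepr 0, fun _ => Subsingleton.elim _ _⟩
  · have monic : (X ^ 2 - C s * X - C t).Monic := by monicity!
    have natDegree_eq : (X ^ 2 - C s * X - C t).natDegree = 2 := by compute_degree!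
    refine ⟨(AdjoinRoot.powerBasis' monic).basis.reindex (finCongr natDegree_eq), fun i => ?_⟩
    rw [Basis.reindex_apply, PowerBasis.basis_eq_pow, AdjoinRoot.powerBasis'_gen]
    rfl

/-- Local invariance under the left-twisted first Reidemeister move: the two-term cochain
complex `0 → A ⊗ A → A → 0` with differential `m` has vanishing cohomology in degree 1
(its cokernel `A / range m` is trivial) and its degree-0 cohomology `ker m` is isomorphic
to `A` as an `R`-module. -/
theorem khovanov_R1_local_invariance (R : Type*) [CommRing R] (s t : R) :
    Subsingleton (KhovanovA R s t ⧸ LinearMap.range (LinearMap.mul' R (KhovanovA R s t)))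
    ∧ Nonempty (LinearMap.ker (LinearMap.mul' R (KhovanovA R s t)) ≃ₗ[R] KhovanovA R s t) := by
  obtain ⟨b, hb⟩ := KhovanovA.exists_basis_eq_pow s t
  exact (khovanov_R1_local_invariance_general b (by simp [hb])).imp_right fun ⟨e⟩ =>
    ⟨e ≪≫ₗ LinearEquiv.funUnique (Fin 1) R _⟩
end
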